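/- Let n and d be integers with 1 ≤ d < n. For every string x : Fin n → Fin 2, the diagonal entry of H_stab at x equals 1 if wt(x) < d, equals 0 if wt(x) = d, and is at least 1 if wt(x) > d. -/

import Mathlib

open Matrix Finset

/-- Hamming weight of a bit string. -/
def wt {n : ℕ} (x : Fin n → Fin 2) : ℕ := (Finset.univ.filter fun i => x i = 1).card

/-- Diagonal projector `Π_S`: the `(x,x)` entry is `1` iff `x i = 1` for all `i ∈ S`. -/
noncomputable def projOn {n : ℕ} (S : Finset (Fin n)) :
    Matrix (Fin n → Fin 2) (Fin n → Fin 2) ℂ :=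
  Matrix.diagonal fun x => if ∀ i ∈ S, x i = 1 then 1 else 0

/-- `H_{>d} := ∑_{|S| = d+1} Π_S`. -/
noncomputable def Hgt (n d : ℕ) : Matrix (Fin n → Fin 2) (Fin n → Fin 2) ℂ :=
  ∑ S ∈ Finset.powersetCard (d + 1) (Finset.univ : Finset (Fin n)), projOn S

/-- `H_{<d} := ∑_{|S| = d} (I − Π_S)`. -/
noncomputable def Hlt (n d : ℕ) : Matrix (Fin n → Fin 2) (Fin n → Fin 2) ℂ :=
  ∑ S ∈ Finset.powersetCard d (Finset.univ : Finset (Fin n)), (1 - projOn S)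

/-- `H_stab := C(n,d)·H_{>d} + H_{<d} − (C(n,d) − 1)·I`. -/
noncomputable def Hstab (n d : ℕ) : Matrix (Fin n → Fin 2) (Fin n → Fin 2) ℂ :=
  (n.choose d : ℂ) • Hgt n d + Hlt n d - ((n.choose d : ℂ) - 1) • 1

lemma filter_subset_powersetCard {α : Type*} [DecidableEq α] (k : ℕ) (s t : Finset α) :
    (powersetCard k s).filter (· ⊆ t) = powersetCard k (s ∩ t) := by
  ext u
  simp only [mem_filter, mem_powersetCard, subset_inter_iff, and_right_comm]

lemma wt_le {n : ℕ} (x : Fin n → Fin 2) : wt x ≤ n :=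
  card_finset_fin_le _

lemma projOn_apply_self {n : ℕ} (S : Finset (Fin n)) (x : Fin n → Fin 2) :
    projOn S x x = if S ⊆ univ.filter fun i => x i = 1 then 1 else 0 := by
  simp only [projOn, diagonal_apply_eq, subset_iff, mem_filter_univ]

lemma sum_projOn_powersetCard (n k : ℕ) :
    ∑ S ∈ powersetCard k (univ : Finset (Fin n)), projOn S =
      diagonal fun x => ((wt x).choose k : ℂ) := by
  ext x y
  rw [Matrix.sum_apply]
  obtain rfl | hxy := eq_or_ne x y
  · simp only [projOn_apply_self, sum_boole, diagonal_apply_eq]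
    rw [filter_subset_powersetCard, univ_inter, card_powersetCard, wt]
  · simp only [projOn, diagonal_apply_ne _ hxy, sum_const_zero]

lemma Hgt_eq_diagonal (n d : ℕ) :
    Hgt n d = diagonal fun x => ((wt x).choose (d + 1) : ℂ) :=
  sum_projOn_powersetCard n (d + 1)

lemma Hlt_eq_diagonal (n d : ℕ) :
    Hlt n d = diagonal fun x => (n.choose d - (wt x).choose d : ℂ) := by
  rw [Hlt, sum_sub_distrib, sum_projOn_powersetCard, sum_const, card_powersetCard, card_fin,
    ← diagonal_one, ← diagonal_smul, diagonal_sub]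
  simp only [Pi.smul_apply, nsmul_one]

/-- The eigenvalue of `Hstab n d` on the basis states of Hamming weight `w`. It is taken in `ℝ`
rather than `ℂ` so that it can be compared with `1`. -/
def stabEigenvalue (n d w : ℕ) : ℝ :=
  n.choose d * w.choose (d + 1) - w.choose d + 1

lemma Hstab_eq_diagonal (n d : ℕ) :
    Hstab n d = diagonal fun x => (stabEigenvalue n d (wt x) : ℂ) := by
  rw [Hstab, Hgt_eq_diagonal, Hlt_eq_diagonal, smul_one_eq_diagonal, ← diagonal_smul,
    diagonal_add, diagonal_sub]
  congr 1
  ext x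
  simp only [Pi.smul_apply, smul_eq_mul, stabEigenvalue]
  push_cast
  ring

lemma stabEigenvalue_of_lt {d w : ℕ} (n : ℕ) (hwd : w < d) : stabEigenvalue n d w = 1 := by
  simp [stabEigenvalue, Nat.choose_eq_zero_of_lt hwd,
    Nat.choose_eq_zero_of_lt (Nat.lt_succ_of_lt hwd)]

lemma stabEigenvalue_self (n d : ℕ) : stabEigenvalue n d d = 0 := by
  simp [stabEigenvalue]

/- The coefficient `C(n,d)` of `H_{>d}` is the most that the term `-C(w,d)` can subtract, so a
single `(d+1)`-subset of the ones already compensates for it. -/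
lemma one_le_stabEigenvalue {n d w : ℕ} (hdw : d < w) (hwn : w ≤ n) :
    1 ≤ stabEigenvalue n d w := by
  have choose_le : w.choose d ≤ n.choose d * w.choose (d + 1) :=
    (Nat.choose_le_choose d hwn).trans (Nat.le_mul_of_pos_right _ (Nat.choose_pos hdw))
  have choose_le_real : (w.choose d : ℝ) ≤ n.choose d * w.choose (d + 1) := mod_cast choose_le
  rw [stabEigenvalue]
  linarith

theorem stmt3 (n d : ℕ) (hd1 : 1 ≤ d) (hdn : d < n) (x : Fin n → Fin 2) :
    (wt x < d → Hstab n d x x = 1) ∧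
    (wt x = d → Hstab n d x x = 0) ∧
    (wt x > d → ∃ r : ℝ, 1 ≤ r ∧ Hstab n d x x = (r : ℂ)) := by
  rw [Hstab_eq_diagonal, diagonal_apply_eq]
  refine ⟨fun hlt => ?_, fun heq => ?_, fun hgt => ⟨_, one_le_stabEigenvalue hgt (wt_le x), rfl⟩⟩
  · rw [stabEigenvalue_of_lt n hlt, Complex.ofReal_one]
  · rw [heq, stabEigenvalue_self, Complex.ofReal_zero]
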